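/- Let m ≥ 1 and n ≥ 1 be integers, and let A_m be the generalized Bott ring determined by integers a^{(i)}_{l,j} in which every fiber dimension n_i equals n. Let D = (d_{ij}) be an m×m integer matrix with determinant ±1 such that (Σ_{j=1}^{m} d_{ij} ȳ_j)^{n+1} = 0 in A_m for every i = 1,…,m. Then there is exactly one index r ∈ {1,…,m} with d_{rm} ≠ 0, and for this r one has d_{rm} = ±1. -/

import Mathlib

open MvPolynomial

/-- The defining relation `f_i = y_i ∏_{l=1}^{n_i} (y_i + ∑_{j<i} a^{(i)}_{l,j} y_j)`
of a generalized Bott tower. -/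
noncomputable def bottRel (m : ℕ) (n : Fin m → ℕ)
    (a : (i : Fin m) → Fin (n i) → Fin m → ℤ) (i : Fin m) : MvPolynomial (Fin m) ℤ :=
  X i * ∏ l : Fin (n i),
    (X i + ∑ j ∈ Finset.univ.filter (fun j => j < i), C (a i l j) * X j)

/-- The generalized Bott ring `A_m = ℤ[y_1,…,y_m]/(f_1,…,f_m)`, the integral
cohomology ring of an `m`-stage generalized Bott manifold. -/
abbrev BottRing (m : ℕ) (n : Fin m → ℕ)
    (a : (i : Fin m) → Fin (n i) → Fin m → ℤ) : Type :=
  MvPolynomial (Fin m) ℤ ⧸ Ideal.span (Set.range (bottRel m n a))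

/-- `ȳ_i`, the class of `y_i` in the generalized Bott ring. -/
noncomputable def ybar (m : ℕ) (n : Fin m → ℕ)
    (a : (i : Fin m) → Fin (n i) → Fin m → ℤ) (i : Fin m) : BottRing m n a :=
  Ideal.Quotient.mk _ (X i)


theorem aux_pow {R : Type*} [CommRing R] (u v : R) (hv : v * v = 0) (k : ℕ) :
    (u + v) ^ (k + 1) = u ^ (k + 1) + (k + 1 : ℕ) * u ^ k * v := by
  induction k with
  | zero => simp
  | succ k ih =>
    rw [pow_succ, ih]
    push_cast
    linear_combination ((k : R) + 1) * u ^ k * hv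

theorem aux_prod {R ι : Type*} [CommRing R] (x : R) (v : ι → R)
    (hv : ∀ i j, v i * v j = 0) (s : Finset ι) :
    x * ∏ l ∈ s, (x + v l) = x ^ s.card * (x + ∑ l ∈ s, v l) := by
  classical
  induction s using Finset.induction_on with
  | empty => simp
  | insert i s hi ih =>
    rw [Finset.prod_insert hi, Finset.sum_insert hi, Finset.card_insert_of_notMem hi]
    have h : v i * ∑ l ∈ s, v l = 0 := by
      rw [Finset.mul_sum]; exact Finset.sum_eq_zero fun j _ => hv i j
    linear_combination (x + v i) * ih + x ^ s.card * h

theorem aux_key (m : ℕ) (n : ℕ) (hn : 0 < n)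
    (a : (i : Fin (m + 1)) → Fin n → Fin (m + 1) → ℤ) (d : Fin (m + 1) → ℤ)
    (hd : (∑ j, d j • ybar (m + 1) (fun _ => n) a j) ^ (n + 1) = 0)
    (hne : d (Fin.last m) ≠ 0) (j : Fin (m + 1)) (hj : j ≠ Fin.last m) :
    ((n : ℤ) + 1) * d j = d (Fin.last m) * ∑ l, a (Fin.last m) l j := by
  classical
  set L := Fin.last m with hL
  let e : Polynomial (DualNumber ℤ) := Polynomial.C DualNumber.eps
  have he : e * e = 0 := by
    simp only [e, ← Polynomial.C_mul, DualNumber.eps_mul_eps, Polynomial.C_0]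
  let g : Fin (m + 1) → Polynomial (DualNumber ℤ) :=
    fun k => if k = L then Polynomial.X else if k = j then e else 0
  have gL : g L = Polynomial.X := by simp [g]
  have gj : g j = e := by simp [g, hj]
  have gk : ∀ k, k ≠ L → k ≠ j → g k = 0 := fun k h1 h2 => by simp [g, h1, h2]
  let φ : MvPolynomial (Fin (m + 1)) ℤ →+* Polynomial (DualNumber ℤ) :=
    (MvPolynomial.aeval g).toRingHom
  have φX : ∀ k, φ (X k) = g k := fun k => by simp [φ]
  have φC : ∀ c : ℤ, φ (C c) = (c : Polynomial (DualNumber ℤ)) := fun c => by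
    simp [φ]
  -- sums
  have hsum : ∀ c : Fin (m + 1) → ℤ, ∑ k ∈ Finset.univ.filter (fun k => k < L),
      (c k : Polynomial (DualNumber ℤ)) * g k = c j * e := by
    intro c
    rw [Finset.sum_eq_single j, gj]
    · intro k hk hkj
      rw [gk k (by simpa using (Finset.mem_filter.1 hk).2.ne) hkj, mul_zero]
    · intro h
      exact absurd (by simpa [hL] using Fin.lt_last_iff_ne_last.2 hj) h
  have hmem : (∑ k, C (d k) * X k) ^ (n + 1) ∈
      Ideal.span (Set.range (bottRel (m + 1) (fun _ => n) a)) := by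
    rw [← Ideal.Quotient.eq_zero_iff_mem, ← hd, map_pow, map_sum]
    congr 1
    refine Finset.sum_congr rfl fun k _ => ?_
    rw [ybar, ← map_zsmul]
    congr 1
    rw [zsmul_eq_mul]; simp
  set P : Polynomial (DualNumber ℤ) := Polynomial.X with hP
  have hF : φ (bottRel (m + 1) (fun _ => n) a L) =
      P ^ n * (P + ((∑ l, a L l j : ℤ) : Polynomial (DualNumber ℤ)) * e) := by
    simp only [bottRel, map_mul, map_prod, map_add, map_sum, φX, φC, gL]
    simp only [hsum]
    rw [aux_prod]
    · simp [Finset.sum_mul]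
    · intro i k
      linear_combination (a L i j : Polynomial (DualNumber ℤ)) * (a L k j) * he
  have hdvd : φ (bottRel (m + 1) (fun _ => n) a L) ∣ φ ((∑ k, C (d k) * X k) ^ (n + 1)) := by
    rw [← Ideal.mem_span_singleton]
    have h2 : Ideal.span (Set.range (bottRel (m + 1) (fun _ => n) a)) ≤
        (Ideal.span {φ (bottRel (m + 1) (fun _ => n) a L)}).comap φ := by
      rw [Ideal.span_le]
      rintro _ ⟨k, rfl⟩
      rw [SetLike.mem_coe, Ideal.mem_comap]
      by_cases hk : k = L
      · rw [hk]; exact Ideal.mem_span_singleton_self _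
      · have : φ (bottRel (m + 1) (fun _ => n) a k) = 0 := by
          simp only [bottRel, map_mul, map_prod, map_add, map_sum, φX, φC]
          by_cases hkj : k = j
          · have hz : ∀ l, ∑ x ∈ Finset.univ.filter (fun x => x < k),
                (a k l x : Polynomial (DualNumber ℤ)) * g x = 0 := by
              intro l
              refine Finset.sum_eq_zero fun x hx => ?_
              have hx' := (Finset.mem_filter.1 hx).2
              rw [gk x (hx'.trans_le (Fin.le_last k)).ne (hkj ▸ hx'.ne), mul_zero]
            simp only [hz, add_zero, Finset.prod_const]
            have hgk : g k = e := by rw [hkj, gj]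
            rw [hgk]
            obtain ⟨n', rfl⟩ : ∃ n', n = n' + 1 := ⟨n - 1, by omega⟩
            simp only [Finset.card_univ, Fintype.card_fin]
            rw [pow_succ', ← mul_assoc, he, zero_mul]
          · rw [gk k hk hkj, zero_mul]
        rw [this]; exact zero_mem _
    exact h2 hmem
  have hZ : φ ((∑ k, C (d k) * X k) ^ (n + 1)) =
      P ^ n * ((d L : Polynomial (DualNumber ℤ)) ^ (n + 1) * P
        + ((n + 1 : ℕ) : Polynomial (DualNumber ℤ)) * d L ^ n * d j * e) := by
    have h1 : φ (∑ k, C (d k) * X k) = d L * P + d j * e := by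
      simp only [map_sum, map_mul, φX, φC]
      rw [← hsum d, ← gL, ← Finset.add_sum_erase _ _ (Finset.mem_univ L)]
      congr 1
      refine Finset.sum_congr ?_ fun _ _ => rfl
      ext k
      simp [hL, Fin.lt_last_iff_ne_last]
    rw [map_pow, h1, aux_pow _ _ (by linear_combination (d j : Polynomial (DualNumber ℤ)) ^ 2 * he)]
    ring
  obtain ⟨q, hq⟩ := hdvd
  rw [hF, hZ, mul_assoc (P ^ n) (P + _) q] at hq
  have hq' := (Polynomial.monic_X_pow (R := DualNumber ℤ) n).isRegular.left hq
  have hev := congrArg (Polynomial.eval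
    (-(((∑ l, a L l j : ℤ) : DualNumber ℤ) * DualNumber.eps))) hq'
  simp only [hP, e, Polynomial.eval_add, Polynomial.eval_mul, Polynomial.eval_pow,
    Polynomial.eval_intCast, Polynomial.eval_natCast, Polynomial.eval_X, Polynomial.eval_C,
    neg_add_cancel, zero_mul] at hev
  generalize (∑ l, a L l j : ℤ) = U at *
  have hev2 : (((n + 1 : ℕ) * d L ^ n * d j - d L ^ (n + 1) * U : ℤ) : DualNumber ℤ)
      * DualNumber.eps = 0 := by
    push_cast at hev ⊢
    linear_combination hev
  have hev3 := congrArg TrivSqZeroExt.snd hev2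
  generalize hz : ((n + 1 : ℕ) * d L ^ n * d j - d L ^ (n + 1) * U : ℤ) = z at hev3
  rw [← zsmul_eq_mul, TrivSqZeroExt.snd_smul, DualNumber.snd_eps] at hev3
  simp at hev3
  apply mul_left_cancel₀ (pow_ne_zero n hne)
  push_cast at hz
  linear_combination hz + hev3

/-- Case 1 in the proof of Lemma 4.1: in a generalized Bott ring with all
fiber dimensions equal to `n`, if `D` is a unimodular integer matrix with
`(∑_j d_{ij} ȳ_j)^{n+1} = 0` for all `i`, then exactly one entry of the last column of `D`
is nonzero, and that entry is `±1`. -/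
theorem stmt4 (m : ℕ) (n : ℕ) (hn : 0 < n)
    (a : (i : Fin (m + 1)) → Fin n → Fin (m + 1) → ℤ)
    (D : Fin (m + 1) → Fin (m + 1) → ℤ)
    (hdet : (Matrix.of D).det = 1 ∨ (Matrix.of D).det = -1)
    (hD : ∀ i, (∑ j, D i j • ybar (m + 1) (fun _ => n) a j) ^ (n + 1) = 0) :
    ∃ r, (D r (Fin.last m) = 1 ∨ D r (Fin.last m) = -1) ∧
      ∀ i, i ≠ r → D i (Fin.last m) = 0 := by
  classical
  have hdet0 : (Matrix.of D).det ≠ 0 := by rcases hdet with h | h <;> simp [h]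
  have hex : ∃ r, D r (Fin.last m) ≠ 0 := by
    by_contra! h
    exact hdet0 (Matrix.det_eq_zero_of_column_eq_zero (Fin.last m) h)
  obtain ⟨r, hr⟩ := hex
  have huniq : ∀ i, i ≠ r → D i (Fin.last m) = 0 := by
    intro i hir
    by_contra hi
    have hcol : ∀ j, D r (Fin.last m) * D i j = D i (Fin.last m) * D r j := by
      intro j
      by_cases hj : j = Fin.last m
      · rw [hj, mul_comm]
      · have h1 := aux_key m n hn a (D i) (hD i) hi j hj
        have h2 := aux_key m n hn a (D r) (hD r) hr j hj
        have hn1 : (n : ℤ) + 1 ≠ 0 := by positivity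
        apply mul_left_cancel₀ hn1
        linear_combination D r (Fin.last m) * h1 - D i (Fin.last m) * h2
    apply hdet0
    rw [← Matrix.exists_vecMul_eq_zero_iff]
    refine ⟨Pi.single i (D r (Fin.last m)) - Pi.single r (D i (Fin.last m)), ?_, ?_⟩
    · intro h
      have := congrFun h i
      simp [hir] at this
      exact hr this
    · rw [Matrix.sub_vecMul]
      ext j
      simp [hcol j]
  refine ⟨r, ?_, huniq⟩
  have hdvd : D r (Fin.last m) ∣ (Matrix.of D).det := by
    rw [Matrix.det_succ_column _ (Fin.last m)]
    refine Finset.dvd_sum fun i _ => ?_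
    by_cases hi : i = r
    · rw [hi, Matrix.of_apply]
      exact Dvd.dvd.mul_right (Dvd.intro_left _ rfl) _
    · simp [huniq i hi]
  apply Int.isUnit_iff.1
  apply isUnit_of_dvd_unit hdvd
  exact Int.isUnit_iff.2 hdet
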